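/- Let u, α ∈ (0,1) and define f_{u,α}(r) = u·r² − (1−α)·{(2/π)·[2E(r) − (1−r²)K(r)] − 1} for r ∈ (0,1). Then f_{u,α}(r) > 0 for all r ∈ (0,1) if and only if u ≥ (1−α)(4/π − 1). -/

import Mathlib

/-!
Write `w = √(1 - r² sin² θ)` and `J r = ∫₀^{π/2} cos² θ / (1 + w) dθ`. The integrand of
`2E - (1 - r²)K` differs from `1 + r² cos² θ / (1 + w)` by the exact derivative of
`r² sin θ cos θ / (1 + w)`, which vanishes at both endpoints, so that
`2E(r) - (1 - r²)K(r) = π/2 + r² J r` (`two_ellipticE_sub`). The function in the theorem is therefore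
`r² (u - (1 - α) (2/π) J r)`. The integrand of `J` is continuous in `(r, θ)` and increases with `r`,
hence `J r < J 1` for `0 < r < 1` and `J r → J 1` as `r → 1`; finally `J 1 = 2 - π/2`, and
`(2/π) J 1 = 4/π - 1` is the sharp bound.
-/

open Real

/-- The complete elliptic integral of the first kind. -/
noncomputable def ellipticK (r : ℝ) : ℝ :=
  ∫ θ in (0 : ℝ)..(π / 2), (Real.sqrt (1 - r ^ 2 * sin θ ^ 2))⁻¹

/-- The complete elliptic integral of the second kind. -/
noncomputable def ellipticE (r : ℝ) : ℝ :=
  ∫ θ in (0 : ℝ)..(π / 2), Real.sqrt (1 - r ^ 2 * sin θ ^ 2)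

/-- The integral `∫₀^{π/2} cos² θ / (1 + √(1 - r² sin² θ)) dθ`, equal to
`(2E(r) - (1 - r²)K(r) - π/2) / r²` for `0 < r < 1`. -/
noncomputable def ellipticJ (r : ℝ) : ℝ :=
  ∫ θ in (0 : ℝ)..(π / 2), cos θ ^ 2 / (1 + √(1 - r ^ 2 * sin θ ^ 2))

lemma one_add_sqrt_ne_zero (x : ℝ) : 1 + √x ≠ 0 := by positivity

lemma continuous_ellipticJ_integrand :
    Continuous fun p : ℝ × ℝ => cos p.2 ^ 2 / (1 + √(1 - p.1 ^ 2 * sin p.2 ^ 2)) :=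
  Continuous.div (by fun_prop) (by fun_prop) fun _ => one_add_sqrt_ne_zero _

lemma continuous_ellipticJ_integrand_right (r : ℝ) :
    Continuous fun θ : ℝ => cos θ ^ 2 / (1 + √(1 - r ^ 2 * sin θ ^ 2)) :=
  Continuous.div (by fun_prop) (by fun_prop) fun _ => one_add_sqrt_ne_zero _

lemma continuous_ellipticJ : Continuous ellipticJ :=
  intervalIntegral.continuous_parametric_intervalIntegral_of_continuous'
    continuous_ellipticJ_integrand _ _

lemma one_sub_sq_mul_sin_sq_pos {r : ℝ} (hr : r ∈ Set.Ioo (0 : ℝ) 1) (θ : ℝ) :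
    0 < 1 - r ^ 2 * sin θ ^ 2 := by
  have h1 : r ^ 2 < 1 := by nlinarith [hr.1, hr.2]
  nlinarith [sin_sq_le_one θ, sq_nonneg (sin θ), sq_nonneg r]

lemma ellipticJ_one : ellipticJ 1 = 2 - π / 2 := by
  have hpi := pi_pos
  -- On `[0, π/2]` the square root is `cos θ`, and `cos² / (1 + cos) = cos - 1 + 1 / (1 + cos)`.
  have h : ∀ θ ∈ Set.uIcc (0 : ℝ) (π / 2),
      HasDerivAt (fun θ => sin θ - θ + sin θ / (1 + cos θ))
        (cos θ ^ 2 / (1 + √(1 - 1 ^ 2 * sin θ ^ 2))) θ := by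
    intro θ hθ
    rw [Set.uIcc_of_le (by positivity)] at hθ
    have hc : 0 ≤ cos θ := cos_nonneg_of_mem_Icc ⟨by linarith [hθ.1], hθ.2⟩
    have hs : √(1 - 1 ^ 2 * sin θ ^ 2) = cos θ := by
      rw [one_pow, one_mul, ← cos_sq', sqrt_sq hc]
    have hne : 1 + cos θ ≠ 0 := by positivity
    rw [hs]
    have hd := ((hasDerivAt_sin θ).sub (hasDerivAt_id θ)).add
      ((hasDerivAt_sin θ).div ((hasDerivAt_cos θ).const_add 1) hne)
    refine hd.congr_deriv ?_
    field_simp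
    linear_combination sin_sq_add_cos_sq θ
  rw [ellipticJ, intervalIntegral.integral_eq_sub_of_hasDerivAt h
    ((continuous_ellipticJ_integrand_right 1).intervalIntegrable _ _)]
  simp
  ring

lemma ellipticJ_lt_ellipticJ_one {r : ℝ} (hr : r ∈ Set.Ioo (0 : ℝ) 1) :
    ellipticJ r < ellipticJ 1 := by
  have hpi := pi_pos
  have h1 : r ^ 2 < 1 := by nlinarith [hr.1, hr.2]
  refine intervalIntegral.integral_lt_integral_of_continuousOn_of_le_of_exists_lt
    (by positivity) (continuous_ellipticJ_integrand_right r).continuousOn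
    (continuous_ellipticJ_integrand_right 1).continuousOn (fun θ _ => ?_)
    ⟨π / 4, ⟨by positivity, by linarith⟩, ?_⟩
  · have : √(1 - 1 ^ 2 * sin θ ^ 2) ≤ √(1 - r ^ 2 * sin θ ^ 2) :=
      sqrt_le_sqrt (by nlinarith [sq_nonneg (sin θ)])
    gcongr
  · have hs : 0 < sin (π / 4) := sin_pos_of_pos_of_lt_pi (by positivity) (by linarith)
    have hc : 0 < cos (π / 4) := cos_pos_of_mem_Ioo ⟨by linarith, by linarith⟩
    have : √(1 - 1 ^ 2 * sin (π / 4) ^ 2) < √(1 - r ^ 2 * sin (π / 4) ^ 2) :=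
      sqrt_lt_sqrt (by nlinarith [sin_sq_le_one (π / 4)]) (by nlinarith [pow_pos hs 2])
    gcongr

/-- The derivative of the boundary term `r² sin θ cos θ / (1 + w)` is the integrand of
`2E - (1 - r²)K` minus `1 + r² cos² θ / (1 + w)`, where `w = √(1 - r² sin² θ)`. -/
lemma hasDerivAt_boundary {r : ℝ} (hr : r ∈ Set.Ioo (0 : ℝ) 1) (θ : ℝ) :
    HasDerivAt (fun θ => r ^ 2 * (sin θ * cos θ) / (1 + √(1 - r ^ 2 * sin θ ^ 2)))
      (2 * √(1 - r ^ 2 * sin θ ^ 2) - (1 - r ^ 2) * (√(1 - r ^ 2 * sin θ ^ 2))⁻¹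
        - (1 + r ^ 2 * (cos θ ^ 2 / (1 + √(1 - r ^ 2 * sin θ ^ 2))))) θ := by
  have hpos := one_sub_sq_mul_sin_sq_pos hr θ
  have hw := (((((hasDerivAt_sin θ).pow 2).const_mul (r ^ 2)).const_sub 1).sqrt hpos.ne').const_add 1
  have hd := (((hasDerivAt_sin θ).mul (hasDerivAt_cos θ)).const_mul (r ^ 2)).div hw
    (one_add_sqrt_ne_zero _)
  refine hd.congr_deriv ?_
  simp only [Pi.mul_apply, Pi.pow_apply]
  have hwp : 0 < √(1 - r ^ 2 * sin θ ^ 2) := sqrt_pos.2 hpos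
  have hsq : √(1 - r ^ 2 * sin θ ^ 2) ^ 2 = 1 - r ^ 2 * sin θ ^ 2 := sq_sqrt hpos.le
  set w := √(1 - r ^ 2 * sin θ ^ 2)
  have hc : cos θ ^ 2 = 1 - sin θ ^ 2 := cos_sq' θ
  have h1 : 1 + w ≠ 0 := by positivity
  field_simp
  norm_num
  linear_combination
    (r ^ 2 * (4 * w * (1 + w) + 2 * r ^ 2 * sin θ ^ 2)) * hc +
    2 * (-3 * w * (1 + w) + r ^ 2 - r ^ 2 * sin θ ^ 2 - (1 - w ^ 2)) * hsq

lemma two_ellipticE_sub {r : ℝ} (hr : r ∈ Set.Ioo (0 : ℝ) 1) :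
    2 * ellipticE r - (1 - r ^ 2) * ellipticK r = π / 2 + r ^ 2 * ellipticJ r := by
  have hE : Continuous fun θ : ℝ => √(1 - r ^ 2 * sin θ ^ 2) := by fun_prop
  have hK : Continuous fun θ : ℝ => (√(1 - r ^ 2 * sin θ ^ 2))⁻¹ :=
    hE.inv₀ fun θ => (sqrt_pos.2 (one_sub_sq_mul_sin_sq_pos hr θ)).ne'
  have hJ := continuous_ellipticJ_integrand_right r
  have hEi := (hE.const_mul 2).intervalIntegrable (μ := MeasureTheory.volume) 0 (π / 2)
  have hKi := (hK.const_mul (1 - r ^ 2)).intervalIntegrable (μ := MeasureTheory.volume) 0 (π / 2)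
  have hJi := (hJ.const_mul (r ^ 2)).intervalIntegrable (μ := MeasureTheory.volume) 0 (π / 2)
  have h1i := intervalIntegrable_const (μ := MeasureTheory.volume) (a := 0) (b := π / 2) (c := (1 : ℝ))
  have key := intervalIntegral.integral_eq_sub_of_hasDerivAt
    (fun θ (_ : θ ∈ Set.uIcc 0 (π / 2)) => hasDerivAt_boundary hr θ)
    ((hEi.sub hKi).sub (h1i.add hJi))
  rw [intervalIntegral.integral_sub (hEi.sub hKi) (h1i.add hJi),
    intervalIntegral.integral_sub hEi hKi, intervalIntegral.integral_add h1i hJi,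
    intervalIntegral.integral_const_mul, intervalIntegral.integral_const_mul,
    intervalIntegral.integral_const_mul] at key
  simp only [cos_pi_div_two, sin_zero, mul_zero, zero_mul, zero_div, sub_zero,
    intervalIntegral.integral_const, smul_eq_mul, mul_one] at key
  rw [ellipticE, ellipticK, ellipticJ]
  linarith

theorem stmt3 (u α : ℝ) (hu : u ∈ Set.Ioo (0 : ℝ) 1) (hα : α ∈ Set.Ioo (0 : ℝ) 1) :
    (∀ r ∈ Set.Ioo (0 : ℝ) 1,
      0 < u * r ^ 2 -
        (1 - α) * (2 / π * (2 * ellipticE r - (1 - r ^ 2) * ellipticK r) - 1)) ↔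
    u ≥ (1 - α) * (4 / π - 1) := by
  have hpi := pi_pos
  have hα' : 0 < 1 - α := by linarith [hα.2]
  have hJ1 : 4 / π - 1 = 2 / π * ellipticJ 1 := by
    rw [ellipticJ_one]
    field_simp
    ring
  have hf : ∀ r ∈ Set.Ioo (0 : ℝ) 1, u * r ^ 2 -
      (1 - α) * (2 / π * (2 * ellipticE r - (1 - r ^ 2) * ellipticK r) - 1) =
      r ^ 2 * (u - (1 - α) * (2 / π * ellipticJ r)) := by
    intro r hr
    rw [two_ellipticE_sub hr]
    field_simp
    ring
  rw [hJ1]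
  constructor
  · intro h
    have hc : Continuous fun r => (1 - α) * (2 / π * ellipticJ r) :=
      (continuous_ellipticJ.const_mul _).const_mul _
    have ht : Filter.Tendsto (fun r => (1 - α) * (2 / π * ellipticJ r))
        (nhdsWithin (1 : ℝ) (Set.Iio 1)) (nhds ((1 - α) * (2 / π * ellipticJ 1))) :=
      (hc.tendsto 1).mono_left nhdsWithin_le_nhds
    refine le_of_tendsto ht ?_
    filter_upwards [Ioo_mem_nhdsLT (zero_lt_one' ℝ)] with r hr
    have h' := h r hr
    rw [hf r hr] at h'
    have := (pos_iff_pos_of_mul_pos h').1 (pow_pos hr.1 2)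
    linarith
  · intro h r hr
    rw [hf r hr]
    have hlt : (1 - α) * (2 / π * ellipticJ r) < (1 - α) * (2 / π * ellipticJ 1) := by
      have := ellipticJ_lt_ellipticJ_one hr
      gcongr
    exact mul_pos (pow_pos hr.1 2) (by linarith)
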